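/- Under the Frenet frame setup for the normal ruled surface NR(u,w) = γ̂(u) + w·ν̂(u): a point (u₀,w₀) is a singular point of NR (i.e. the partial derivatives NR_u(u₀,w₀) and NR_w(u₀,w₀) are linearly dependent, equivalently NR_u × NR_w = 0 there) if and only if κ_t(u₀) = 0 and w₀·κ_ν(u₀) = 1. -/

import Mathlib

open Filter

noncomputable section

/-- Vectors in ℝ³, modeled as `Fin 3 → ℝ`. -/
abbrev R3 : Type := Fin 3 → ℝ

/-- The Euclidean inner product on ℝ³. -/
def dot3 (a b : R3) : ℝ := a 0 * b 0 + a 1 * b 1 + a 2 * b 2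

/-- The determinant det(a,b,c) of three vectors of ℝ³. -/
def det3 (a b c : R3) : ℝ := Matrix.det (Matrix.of ![a, b, c])

/-- Partial derivative in the `u`-direction. -/
def pu {E : Type*} [NormedAddCommGroup E] [NormedSpace ℝ E] (F : ℝ × ℝ → E) (p : ℝ × ℝ) : E :=
  fderiv ℝ F p (1, 0)

/-- Partial derivative in the `w`-direction. -/
def pw {E : Type*} [NormedAddCommGroup E] [NormedSpace ℝ E] (F : ℝ × ℝ → E) (p : ℝ × ℝ) : E :=
  fderiv ℝ F p (0, 1)

/-- The Frenet-type frame setup along the singular locus γ̂: `{γ̂', ĥ, ν̂}` is an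
orthonormal frame satisfying the Frenet-type equations with singular curvature κ_s,
limiting normal curvature κ_ν and cuspidal torsion κ_t. -/
structure FrenetSetup (γ h ν : ℝ → R3) (κs κν κt : ℝ → ℝ) : Prop where
  smooth_γ : ContDiff ℝ (⊤ : ℕ∞) γ
  smooth_h : ContDiff ℝ (⊤ : ℕ∞) h
  smooth_ν : ContDiff ℝ (⊤ : ℕ∞) ν
  smooth_κs : ContDiff ℝ (⊤ : ℕ∞) κs
  smooth_κν : ContDiff ℝ (⊤ : ℕ∞) κν
  smooth_κt : ContDiff ℝ (⊤ : ℕ∞) κt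
  unit_t : ∀ u, dot3 (deriv γ u) (deriv γ u) = 1
  unit_h : ∀ u, dot3 (h u) (h u) = 1
  unit_ν : ∀ u, dot3 (ν u) (ν u) = 1
  orth_th : ∀ u, dot3 (deriv γ u) (h u) = 0
  orth_tν : ∀ u, dot3 (deriv γ u) (ν u) = 0
  orth_hν : ∀ u, dot3 (h u) (ν u) = 0
  frenet_t : ∀ u, deriv (deriv γ) u = κs u • h u + κν u • ν u
  frenet_h : ∀ u, deriv h u = (-κs u) • deriv γ u + κt u • ν u
  frenet_ν : ∀ u, deriv ν u = (-κν u) • deriv γ u - κt u • h u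

/-- The normal ruled surface NR(u,w) = γ̂(u) + w·ν̂(u). -/
def NR (γ ν : ℝ → R3) (p : ℝ × ℝ) : R3 := γ p.1 + p.2 • ν p.1

/-!
Write `t = γ'` and `ν' = -κν t - κt h`. Then `NR_u = (1 - w κν) t - w κt h` and `NR_w = ν`. As
`t`, `h`, `ν` are linearly independent, `NR_u` and `NR_w` are dependent exactly when both
coefficients of `NR_u` vanish; then `w κν = 1` forces `w ≠ 0`, so that `w κt = 0` means `κt = 0`.
-/

section LinearAlgebra

variable {R M : Type*} [Ring R] [NoZeroDivisors R] [AddCommGroup M] [Module R M]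
  {x y z : M} {a b : R}

lemma linearIndependent_pair_smul_add_smul (hxyz : LinearIndependent R ![x, y, z])
    (hab : a ≠ 0 ∨ b ≠ 0) : LinearIndependent R ![a • x + b • y, z] := by
  rw [LinearIndependent.pair_iff]
  intro s r hsr
  have hsum : (s * a) • x + (s * b) • y + r • z = 0 := by
    rw [← hsr, smul_add, smul_smul, smul_smul]
  have hzero := Fintype.linearIndependent_iff.mp hxyz ![s * a, s * b, r]
    (by simpa [Fin.sum_univ_three] using hsum)
  have hsa : s * a = 0 := hzero 0
  have hsb : s * b = 0 := hzero 1
  have hr : r = 0 := hzero 2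
  exact ⟨hab.elim (mul_eq_zero.mp hsa).resolve_right (mul_eq_zero.mp hsb).resolve_right, hr⟩

lemma not_linearIndependent_pair_smul_add_smul_iff [Nontrivial R]
    (hxyz : LinearIndependent R ![x, y, z]) :
    ¬ LinearIndependent R ![a • x + b • y, z] ↔ a = 0 ∧ b = 0 := by
  constructor
  · intro hdep
    by_contra hab
    exact hdep (linearIndependent_pair_smul_add_smul hxyz (not_and_or.mp hab))
  · rintro ⟨rfl, rfl⟩ hind
    exact hind.ne_zero 0 (by simp)

end LinearAlgebra

section RuledSurface

variable {𝕜 E : Type*} [NontriviallyNormedField 𝕜] [NormedAddCommGroup E] [NormedSpace 𝕜 E]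

/-- The ruled surface `(u, w) ↦ γ u + w • ν u` with base curve `γ` and director curve `ν`, in any
normed space. For curves in `R3` it is `NR γ ν`. -/
def ruledSurface (γ ν : 𝕜 → E) (p : 𝕜 × 𝕜) : E := γ p.1 + p.2 • ν p.1

lemma hasFDerivAt_ruledSurface {γ ν : 𝕜 → E} {γ' ν' : E} {u : 𝕜} (hγ : HasDerivAt γ γ' u)
    (hν : HasDerivAt ν ν' u) (w : 𝕜) :
    HasFDerivAt (ruledSurface γ ν)
      ((ContinuousLinearMap.fst 𝕜 𝕜 𝕜).smulRight (γ' + w • ν') +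
        (ContinuousLinearMap.snd 𝕜 𝕜 𝕜).smulRight (ν u)) (u, w) := by
  have hbase : HasFDerivAt (fun p : 𝕜 × 𝕜 => γ p.1) _ (u, w) :=
    HasFDerivAt.comp (g := γ) (u, w) hγ.hasFDerivAt hasFDerivAt_fst
  have hdirector : HasFDerivAt (fun p : 𝕜 × 𝕜 => ν p.1) _ (u, w) :=
    HasFDerivAt.comp (g := ν) (u, w) hν.hasFDerivAt hasFDerivAt_fst
  refine (hbase.add (hasFDerivAt_snd.smul hdirector)).congr_fderiv ?_
  ext <;> simp

end RuledSurface

section PartialDerivatives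

variable {E : Type*} [NormedAddCommGroup E] [NormedSpace ℝ E] {γ ν : ℝ → E} {u : ℝ}

lemma pu_ruledSurface {γ' ν' : E} (hγ : HasDerivAt γ γ' u) (hν : HasDerivAt ν ν' u) (w : ℝ) :
    pu (ruledSurface γ ν) (u, w) = γ' + w • ν' := by
  simp [pu, (hasFDerivAt_ruledSurface hγ hν w).fderiv]

lemma pw_ruledSurface (hγ : DifferentiableAt ℝ γ u) (hν : DifferentiableAt ℝ ν u) (w : ℝ) :
    pw (ruledSurface γ ν) (u, w) = ν u := by
  simp [pw, (hasFDerivAt_ruledSurface hγ.hasDerivAt hν.hasDerivAt w).fderiv]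

theorem stmt_3_general {t h : E} {κν κt : ℝ} (hγ : HasDerivAt γ t u)
    (hν : HasDerivAt ν (-κν • t - κt • h) u) (hframe : LinearIndependent ℝ ![t, h, ν u]) (w : ℝ) :
    ¬ LinearIndependent ℝ ![pu (ruledSurface γ ν) (u, w), pw (ruledSurface γ ν) (u, w)] ↔
      κt = 0 ∧ w * κν = 1 := by
  have hpu : pu (ruledSurface γ ν) (u, w) = (1 - w * κν) • t + (-(w * κt)) • h := by
    rw [pu_ruledSurface hγ hν]
    module
  have hpw : pw (ruledSurface γ ν) (u, w) = ν u :=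
    pw_ruledSurface hγ.differentiableAt hν.differentiableAt w
  rw [hpu, hpw, not_linearIndependent_pair_smul_add_smul_iff hframe, neg_eq_zero, sub_eq_zero,
    eq_comm, and_comm]
  exact and_congr_left fun hw => mul_eq_zero_iff_left (left_ne_zero_of_mul_eq_one hw)

end PartialDerivatives

lemma dot3_comm (a b : R3) : dot3 a b = dot3 b a := by
  simp only [dot3, mul_comm]

lemma dot3_eq_dotProduct (a b : R3) : dot3 a b = a ⬝ᵥ b := by
  simp only [dot3, dotProduct, Fin.sum_univ_three]

namespace FrenetSetup

variable {γ h ν : ℝ → R3} {κs κν κt : ℝ → ℝ}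

lemma linearIndependent_frame (H : FrenetSetup γ h ν κs κν κt) (u : ℝ) :
    LinearIndependent ℝ ![deriv γ u, h u, ν u] := by
  have orth_ht := (dot3_comm (h u) (deriv γ u)).trans (H.orth_th u)
  have orth_νt := (dot3_comm (ν u) (deriv γ u)).trans (H.orth_tν u)
  have orth_νh := (dot3_comm (ν u) (h u)).trans (H.orth_hν u)
  let F : Matrix (Fin 3) (Fin 3) ℝ := Matrix.of ![deriv γ u, h u, ν u]
  have horthogonal : F * F.transpose = 1 := by
    ext i j
    change ![deriv γ u, h u, ν u] i ⬝ᵥ ![deriv γ u, h u, ν u] j = _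
    rw [← dot3_eq_dotProduct]
    fin_cases i <;> fin_cases j <;>
      simp [H.unit_t, H.unit_h, H.unit_ν, H.orth_th, H.orth_tν, H.orth_hν,
        orth_ht, orth_νt, orth_νh]
  exact Matrix.linearIndependent_rows_of_isUnit (IsUnit.of_mul_eq_one _ horthogonal)

lemma hasDerivAt_γ (H : FrenetSetup γ h ν κs κν κt) (u : ℝ) : HasDerivAt γ (deriv γ u) u :=
  (H.smooth_γ.differentiable (by simp) u).hasDerivAt

lemma hasDerivAt_ν (H : FrenetSetup γ h ν κs κν κt) (u : ℝ) :
    HasDerivAt ν (-κν u • deriv γ u - κt u • h u) u :=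
  H.frenet_ν u ▸ (H.smooth_ν.differentiable (by simp) u).hasDerivAt

end FrenetSetup

/-- (u₀,w₀) is a singular point of the normal ruled surface NR iff
κ_t(u₀) = 0 and w₀·κ_ν(u₀) = 1. -/
theorem stmt_3 (γ h ν : ℝ → R3) (κs κν κt : ℝ → ℝ) (H : FrenetSetup γ h ν κs κν κt)
    (u₀ w₀ : ℝ) :
    ¬ LinearIndependent ℝ ![pu (NR γ ν) (u₀, w₀), pw (NR γ ν) (u₀, w₀)] ↔
      (κt u₀ = 0 ∧ w₀ * κν u₀ = 1) :=
  stmt_3_general (H.hasDerivAt_γ u₀) (H.hasDerivAt_ν u₀) (H.linearIndependent_frame u₀) w₀
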